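/- arXiv:1709.02870 — 2 statements merged into one kernel-verified Lean document; each statement's English description precedes it below -/
import Mathlib

section
/- For every i ≥ 1 one has rad(J^{-i}(M)) = rad(I^{-i}(M)), i.e., the radical of the degree -i jumping ideal equals the radical of the degree -i fitting ideal; moreover J^{0}(M) ⊆ I^{-1}(M). -/
/-!
All ideals in sight are compared through the primes containing them. For a prime `p` with residue
field `κ(p)`, a determinantal ideal `I_k(A)` lies in `p` iff the matrix `A` has rank `< k` over
`κ(p)` (`minorsIdeal_le_ker_iff`), and over the fraction field of `R` the same criterion identifies
`detRank A` with the usual rank (`detRank_eq`). Since the rank of a block diagonal matrix is the sum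
of the ranks of the blocks, a prime contains the jumping ideal `I_n(B ⊕ A)` iff it contains
`I(A)` or `I(B)`, provided `rank A + rank B = n`.

It remains to see that the latter holds for two consecutive maps `A`, `B` of the resolution, and
that each prime containing `I(B)` contains `I(A)`. Both follow from `le_rank_map`: if
`x = det A[f, g]` is a nonzero minor of `A` of maximal size `ρ`, then the columns of
`x • 1 - G * adj(A[f, g]) * A[f, :]` (with `G` the inclusion of the coordinates `g`) are killed by
`A[f, :]`, hence by `A`, so by exactness they lie in the image of `B`. Under a homomorphism to a
field that does not kill `x`, the matrix `x • 1` acquires rank `n` while the subtracted term has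
rank at most `ρ`, so the image of `B` has rank at least `n - ρ`.
-/

/-!
Context: `R` is a Noetherian Cohen–Macaulay integral domain and `M` is a nonzero finitely
generated `R`-module with a finite free resolution
`0 → F^{-l} → ⋯ → F^{-1} → F^{0} → M → 0`.
We encode the resolution by the ranks `r i` of the free modules `F^{-i}` (with `r i = 0` for
`i > l`) and by matrices `D i` representing the differentials `∂^{-(i+1)} : F^{-(i+1)} → F^{-i}`
(so for `i ≥ 1` the differential `∂^{-i}` is the matrix `D (i-1)`), together with a surjection
`π : F^0 → M` with `ker π = im ∂^{-1}` and exactness `ker ∂^{-(i+1)} = im ∂^{-(i+2)}`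
for all `i ≥ 0`.
-/

/-- The ideal of `R` generated by all `k × k` minors of the matrix `A`.  For `k = 0` this is the
unit ideal, and it is the zero ideal when `k` exceeds the number of rows or columns. -/
noncomputable def minorsIdeal {R : Type*} [CommRing R] {m n : Type*} [Fintype m] [Fintype n]
    (k : ℕ) (A : Matrix m n R) : Ideal R :=
  Ideal.span {x : R | ∃ (f : Fin k → m) (g : Fin k → n), x = (A.submatrix f g).det}

/-- The rank of a matrix over a domain: the largest `k` such that some `k × k` minor of `A`
is nonzero. -/
noncomputable def detRank {R : Type*} [CommRing R] {m n : Type*} [Fintype m] [Fintype n]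
    (A : Matrix m n R) : ℕ :=
  sSup {k : ℕ | minorsIdeal k A ≠ ⊥}

/-- The determinantal (fitting-type) ideal `I_{rank A}(A)` of a matrix `A`; applied to the matrix
of `∂^{-i}` it gives the degree `-i` fitting ideal `I^{-i}(M)`. -/
noncomputable def fittingIdealOf {R : Type*} [CommRing R] {m n : Type*} [Fintype m] [Fintype n]
    (A : Matrix m n R) : Ideal R :=
  minorsIdeal (detRank A) A

/-- The degree `-i` jumping ideal `J^{-i}(M) = I_{rank F^{-i}}(∂^{-i-1} ⊕ ∂^{-i})` of a free
resolution with ranks `r i = rank F^{-i}` and differentials `D i = ∂^{-(i+1)}`.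
For `i = 0` the map `∂^0` is zero and `F^1 = 0`, so the block matrix of `∂^{-1} ⊕ ∂^0` has the
same minors of size `r 0` as the matrix of `∂^{-1}` alone. -/
noncomputable def jumpIdeal {R : Type*} [CommRing R] (r : ℕ → ℕ)
    (D : ∀ i : ℕ, Matrix (Fin (r i)) (Fin (r (i + 1))) R) : ℕ → Ideal R
  | 0 => minorsIdeal (r 0) (D 0)
  | (i + 1) => minorsIdeal (r (i + 1)) (Matrix.fromBlocks (D (i + 1)) 0 0 (D i))

/-- The height (codimension) of an ideal: the infimum of `Order.height` (in the prime spectrum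
ordered by inclusion) over all primes containing it. -/
noncomputable def idealHeight (R : Type*) [CommRing R] (I : Ideal R) : ℕ∞ :=
  ⨅ (p : PrimeSpectrum R) (_ : I ≤ p.asIdeal), Order.height p

/-- The depth (grade) of an ideal `I` of `R`: the supremum of the lengths of regular sequences
on `R` consisting of elements of `I`. -/
noncomputable def idealDepth (R : Type*) [CommRing R] (I : Ideal R) : ℕ∞ :=
  sSup {n : ℕ∞ | ∃ rs : List R, (rs.length : ℕ∞) = n ∧ (∀ x ∈ rs, x ∈ I) ∧
    RingTheory.Sequence.IsRegular R rs}

/-- A Noetherian ring is Cohen–Macaulay if and only if for every proper ideal its depth (grade)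
equals its height (codimension); we take this characterization as the definition. -/
def IsCohenMacaulayRing (R : Type*) [CommRing R] : Prop :=
  ∀ I : Ideal R, I ≠ ⊤ → idealDepth R I = idealHeight R I

open scoped Matrix

/-! ### Rank and minors over a field -/

section MatrixRank

variable {K : Type*} [Field K]

lemma matrix_rank_add_le {m n : Type*} [Fintype m] [Fintype n] (A B : Matrix m n K) :
    (A + B).rank ≤ A.rank + B.rank := by
  unfold Matrix.rank
  rw [Matrix.mulVecLin_add]
  have h : LinearMap.range (A.mulVecLin + B.mulVecLin) ≤
      LinearMap.range A.mulVecLin ⊔ LinearMap.range B.mulVecLin := by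
    rintro _ ⟨v, rfl⟩
    exact Submodule.add_mem_sup ⟨v, rfl⟩ ⟨v, rfl⟩
  exact (Submodule.finrank_mono h).trans (Submodule.finrank_add_le_finrank_add_finrank _ _)

lemma exists_rows_of_le_rank {m n : Type*} [Fintype m] [Fintype n] (A : Matrix m n K) {k : ℕ}
    (hk : k ≤ A.rank) : ∃ f : Fin k → m, (A.submatrix f id).rank = k := by
  rw [Matrix.rank_eq_finrank_span_row] at hk
  obtain ⟨v, hv, -, hli⟩ := Submodule.exists_fun_fin_finrank_span_eq K (Set.range A.row)
  choose f hf using hv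
  refine ⟨f ∘ Fin.castLE hk, ?_⟩
  have h : LinearIndependent K (A.submatrix (f ∘ Fin.castLE hk) id).row := by
    have : (A.submatrix (f ∘ Fin.castLE hk) id).row = v ∘ Fin.castLE hk := by
      funext i
      exact hf _
    rw [this]
    exact hli.comp _ (Fin.castLE_injective hk)
  simpa using h.rank_matrix

/-- Over a field, the rank is at least `k` exactly when some `k × k` minor is nonzero. -/
lemma le_rank_iff_exists_minor {m n : Type*} [Fintype m] [Fintype n] (A : Matrix m n K) (k : ℕ) :
    k ≤ A.rank ↔ ∃ (f : Fin k → m) (g : Fin k → n), (A.submatrix f g).det ≠ 0 := by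
  constructor
  · intro hk
    obtain ⟨f, hf⟩ := exists_rows_of_le_rank A hk
    rw [← Matrix.rank_transpose] at hf
    obtain ⟨g, hg⟩ := exists_rows_of_le_rank _ hf.ge
    refine ⟨f, g, fun h0 => ?_⟩
    have hli : LinearIndependent K ((A.submatrix f id)ᵀ.submatrix g id).row := by
      rw [linearIndependent_iff_card_eq_finrank_span, Set.finrank,
        ← Matrix.rank_eq_finrank_span_row, hg, Fintype.card_fin]
    rw [Matrix.linearIndependent_rows_iff_isUnit, Matrix.isUnit_iff_isUnit_det] at hli
    rw [← Matrix.det_transpose] at h0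
    exact hli.ne_zero h0
  · rintro ⟨f, g, h⟩
    have := Matrix.rank_of_det_ne_zero h
    rw [Fintype.card_fin] at this
    rw [← this]
    exact Matrix.rank_submatrix_le A f g

lemma rank_fromBlocks_diag {m n m' n' : Type*} [Fintype m] [Fintype n] [Fintype m'] [Fintype n']
    (B : Matrix m n K) (A : Matrix m' n' K) :
    (Matrix.fromBlocks B 0 0 A).rank = B.rank + A.rank := by
  classical
  apply le_antisymm
  · have h : Matrix.fromBlocks B 0 0 A =
        Matrix.fromRows (1 : Matrix m m K) 0 * B * Matrix.fromCols (1 : Matrix n n K) 0 +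
        Matrix.fromRows 0 (1 : Matrix m' m' K) * A * Matrix.fromCols 0 (1 : Matrix n' n' K) := by
      ext (i | i) (j | j) <;> simp [Matrix.fromRows_mul]
    rw [h]
    refine (matrix_rank_add_le _ _).trans (Nat.add_le_add ?_ ?_)
    · exact (Matrix.rank_mul_le_left _ _).trans (Matrix.rank_mul_le_right _ _)
    · exact (Matrix.rank_mul_le_left _ _).trans (Matrix.rank_mul_le_right _ _)
  · obtain ⟨f, g, h⟩ := (le_rank_iff_exists_minor B _).1 le_rfl
    obtain ⟨f', g', h'⟩ := (le_rank_iff_exists_minor A _).1 le_rfl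
    have hs : (Matrix.fromBlocks B 0 0 A).submatrix (Sum.map f f') (Sum.map g g') =
        Matrix.fromBlocks (B.submatrix f g) 0 0 (A.submatrix f' g') := by
      ext (i | i) (j | j) <;> rfl
    have hd : ((Matrix.fromBlocks B 0 0 A).submatrix (Sum.map f f') (Sum.map g g')).det ≠ 0 := by
      rw [hs, Matrix.det_fromBlocks_zero₂₁]
      exact mul_ne_zero h h'
    have := Matrix.rank_of_det_ne_zero hd
    rw [Fintype.card_sum, Fintype.card_fin, Fintype.card_fin] at this
    rw [← this]
    exact Matrix.rank_submatrix_le _ _ _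

end MatrixRank

/-! ### Determinantal ideals and specialization -/

section Minors

variable {R : Type*} [CommRing R]

/-- Specialization criterion: `I_k(A)` is killed by a homomorphism to a field exactly when the
specialized matrix has rank less than `k`. -/
lemma minorsIdeal_le_ker_iff {K : Type*} [Field K] (φ : R →+* K) {m n : Type*} [Fintype m]
    [Fintype n] (k : ℕ) (A : Matrix m n R) :
    minorsIdeal k A ≤ RingHom.ker φ ↔ (A.map φ).rank < k := by
  rw [← not_le, le_rank_iff_exists_minor, minorsIdeal, Ideal.span_le]
  have key : ∀ (f : Fin k → m) (g : Fin k → n),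
      ((A.map φ).submatrix f g).det = φ (A.submatrix f g).det := by
    intro f g
    rw [RingHom.map_det]
    rfl
  constructor
  · rintro h ⟨f, g, hfg⟩
    rw [key] at hfg
    exact hfg (h ⟨f, g, rfl⟩)
  · rintro h _ ⟨f, g, rfl⟩
    by_contra hne
    refine h ⟨f, g, ?_⟩
    rw [key]
    exact hne

variable [IsDomain R]

lemma minorsIdeal_eq_bot_iff {m n : Type*} [Fintype m] [Fintype n] (k : ℕ) (A : Matrix m n R) :
    minorsIdeal k A = ⊥ ↔ (A.map (algebraMap R (FractionRing R))).rank < k := by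
  rw [← minorsIdeal_le_ker_iff,
    (RingHom.injective_iff_ker_eq_bot _).1 (IsFractionRing.injective R (FractionRing R)), le_bot_iff]

lemma detRank_eq {m n : Type*} [Fintype m] [Fintype n] (A : Matrix m n R) :
    detRank A = (A.map (algebraMap R (FractionRing R))).rank := by
  unfold detRank
  have : {k : ℕ | minorsIdeal k A ≠ ⊥} =
      Set.Iic (A.map (algebraMap R (FractionRing R))).rank := by
    ext k
    simp [minorsIdeal_eq_bot_iff]
  rw [this, csSup_Iic]

/-- If every vector killed by `A` lies in the image of `B`, and some minor of `A` of maximal size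
survives in the field `L`, then `B` has rank at least `n - rank A` over `L`. -/
lemma le_rank_map {m n q : Type*} [Fintype m] [Fintype n] [Fintype q]
    (A : Matrix m n R) (B : Matrix n q R)
    (hAB : LinearMap.ker A.mulVecLin ≤ LinearMap.range B.mulVecLin)
    (f : Fin (detRank A) → m) (g : Fin (detRank A) → n) {L : Type*} [Field L] (φ : R →+* L)
    (hx0 : (A.submatrix f g).det ≠ 0) (hx : φ (A.submatrix f g).det ≠ 0) :
    Fintype.card n ≤ (B.map φ).rank + detRank A := by
  classical
  set x := (A.submatrix f g).det with hxdef
  set ι := algebraMap R (FractionRing R)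
  have hι : Function.Injective ι := IsFractionRing.injective R (FractionRing R)
  set G : Matrix n (Fin (detRank A)) R := (1 : Matrix n n R).submatrix id g with hG
  set C := (A.submatrix f g).adjugate * A.submatrix f id with hC
  set V : Matrix n n R := x • (1 : Matrix n n R) - G * C with hV
  have hfG : A.submatrix f id * G = A.submatrix f g := by
    ext i j
    simp [hG, Matrix.mul_apply, Matrix.one_apply]
  have hfV : A.submatrix f id * V = 0 := by
    rw [hV, Matrix.mul_sub, ← Matrix.mul_assoc, hfG, hC, ← Matrix.mul_assoc,
      Matrix.mul_adjugate, ← hxdef]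
    simp
  -- Over the fraction field the rows `f` span the row space of `A`, so the two kernels agree.
  have hker : LinearMap.ker ((A.map ι).mulVecLin) =
      LinearMap.ker (((A.map ι).submatrix f id).mulVecLin) := by
    apply Submodule.eq_of_le_of_finrank_le
    · intro v hv
      rw [LinearMap.mem_ker, Matrix.mulVecLin_apply] at hv ⊢
      funext i
      exact congrFun hv (f i)
    · have h1 := LinearMap.finrank_range_add_finrank_ker (A.map ι).mulVecLin
      have h2 := LinearMap.finrank_range_add_finrank_ker ((A.map ι).submatrix f id).mulVecLin
      have h3 : detRank A ≤ ((A.map ι).submatrix f id).rank := by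
        rw [le_rank_iff_exists_minor]
        refine ⟨id, g, ?_⟩
        have : (((A.map ι).submatrix f id).submatrix id g).det = ι x := by
          rw [hxdef, RingHom.map_det]
          rfl
        rw [this]
        exact (map_ne_zero_iff ι hι).2 hx0
      replace h3 : (A.map ι).rank ≤ _ := (detRank_eq A).ge.trans h3
      unfold Matrix.rank at h3
      omega
  have hAV : A * V = 0 := by
    apply Matrix.map_injective hι
    have hfV' : (A.map ι).submatrix f id * V.map ι = 0 := by
      have := congrArg (fun X => Matrix.map X ι) hfV
      simpa [Matrix.map_mul, Matrix.submatrix_map] using this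
    change (A * V).map ι = (0 : Matrix m n R).map ι
    rw [Matrix.map_mul]
    ext i j
    have hmem : (V.map ι).col j ∈ LinearMap.ker (((A.map ι).submatrix f id).mulVecLin) := by
      rw [LinearMap.mem_ker, Matrix.mulVecLin_apply]
      funext i
      exact congrFun (congrFun hfV' i) j
    rw [← hker, LinearMap.mem_ker, Matrix.mulVecLin_apply] at hmem
    rw [Matrix.map_zero _ (map_zero ι)]
    exact congrFun hmem i
  have hcol : ∀ j, ∃ w, B.mulVecLin w = V.col j := by
    intro j
    apply hAB
    rw [LinearMap.mem_ker, Matrix.mulVecLin_apply]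
    funext i
    exact congrFun (congrFun hAV i) j
  choose w hw using hcol
  have hBW : B * (Matrix.of w)ᵀ = V := by
    ext i j
    exact congrFun (hw j) i
  have hsum : (φ x) • (1 : Matrix n n L) =
      B.map φ * ((Matrix.of w)ᵀ).map φ + G.map φ * C.map φ := by
    rw [← Matrix.map_mul, ← Matrix.map_mul, hBW, hV]
    ext i j
    rw [Matrix.add_apply, Matrix.map_apply, Matrix.map_apply, ← map_add, Matrix.sub_apply,
      sub_add_cancel]
    simp [Matrix.one_apply, apply_ite φ]
  have hrank : ((φ x) • (1 : Matrix n n L)).rank = Fintype.card n := by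
    apply Matrix.rank_of_det_ne_zero
    rw [Matrix.det_smul, Matrix.det_one, mul_one]
    exact pow_ne_zero _ hx
  rw [← hrank, hsum]
  refine (matrix_rank_add_le _ _).trans (Nat.add_le_add (Matrix.rank_mul_le_left _ _) ?_)
  refine (Matrix.rank_mul_le_left _ _).trans ?_
  simpa using Matrix.rank_le_card_width (G.map φ)

lemma exists_fitting_minor {m n : Type*} [Fintype m] [Fintype n] (A : Matrix m n R) :
    ∃ (f : Fin (detRank A) → m) (g : Fin (detRank A) → n), (A.submatrix f g).det ≠ 0 := by
  by_contra! h
  have : minorsIdeal (detRank A) A = ⊥ := by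
    rw [minorsIdeal, Ideal.span_eq_bot]
    rintro _ ⟨f, g, rfl⟩
    exact h f g
  rw [minorsIdeal_eq_bot_iff, detRank_eq] at this
  exact lt_irrefl _ this

lemma detRank_add_detRank {m n q : Type*} [Fintype m] [Fintype n] [Fintype q]
    (A : Matrix m n R) (B : Matrix n q R)
    (hAB : LinearMap.ker A.mulVecLin = LinearMap.range B.mulVecLin) :
    detRank B + detRank A = Fintype.card n := by
  have hι : Function.Injective (algebraMap R (FractionRing R)) :=
    IsFractionRing.injective R (FractionRing R)
  apply le_antisymm
  · have h0 : A * B = 0 := by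
      classical
      ext i j
      have : B.mulVecLin (Pi.single j 1) ∈ LinearMap.ker A.mulVecLin := hAB ▸ ⟨_, rfl⟩
      rw [LinearMap.mem_ker, Matrix.mulVecLin_apply, Matrix.mulVecLin_apply,
        Matrix.mulVec_single_one] at this
      exact congrFun this i
    rw [detRank_eq, detRank_eq, add_comm]
    apply Matrix.rank_add_rank_le_card_of_mul_eq_zero
    rw [← Matrix.map_mul, h0]
    simp
  · obtain ⟨f, g, h⟩ := exists_fitting_minor A
    have := le_rank_map A B hAB.le f g (algebraMap R (FractionRing R)) h
      ((map_ne_zero_iff _ hι).2 h)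
    rwa [detRank_eq B]

/-- For an exact pair, the locus where the left map drops rank lies in the locus where the right
map does. -/
lemma fittingIdealOf_le_prime {m n q : Type*} [Fintype m] [Fintype n] [Fintype q]
    (A : Matrix m n R) (B : Matrix n q R)
    (hAB : LinearMap.ker A.mulVecLin = LinearMap.range B.mulVecLin)
    (p : Ideal R) [p.IsPrime] (hB : fittingIdealOf B ≤ p) : fittingIdealOf A ≤ p := by
  have hp := Ideal.ker_algebraMap_residueField p
  rw [← hp] at hB
  unfold fittingIdealOf at hB
  rw [minorsIdeal_le_ker_iff] at hB
  unfold fittingIdealOf minorsIdeal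
  rw [Ideal.span_le]
  rintro _ ⟨f, g, rfl⟩
  by_contra hx
  have hx0 : (A.submatrix f g).det ≠ 0 := fun h => hx (by rw [h]; exact p.zero_mem)
  have hx1 : algebraMap R p.ResidueField (A.submatrix f g).det ≠ 0 := by
    intro h
    rw [← RingHom.mem_ker, hp] at h
    exact hx h
  have h1 := le_rank_map A B hAB.le f g (algebraMap R p.ResidueField) hx0 hx1
  have h2 := detRank_add_detRank A B hAB
  omega

lemma minorsIdeal_fromBlocks_le_prime_iff {m n q : Type*} [Fintype m] [Fintype n] [Fintype q]
    (A : Matrix m n R) (B : Matrix n q R)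
    (hAB : LinearMap.ker A.mulVecLin = LinearMap.range B.mulVecLin)
    (p : Ideal R) [p.IsPrime] :
    minorsIdeal (Fintype.card n) (Matrix.fromBlocks B 0 0 A) ≤ p ↔ fittingIdealOf A ≤ p := by
  have h2 := detRank_add_detRank A B hAB
  have hB := fittingIdealOf_le_prime A B hAB p
  rw [← Ideal.ker_algebraMap_residueField p] at hB ⊢
  unfold fittingIdealOf at hB ⊢
  rw [minorsIdeal_le_ker_iff, minorsIdeal_le_ker_iff] at hB
  rw [minorsIdeal_le_ker_iff, minorsIdeal_le_ker_iff, Matrix.fromBlocks_map,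
    Matrix.map_zero _ (map_zero _), Matrix.map_zero _ (map_zero _), rank_fromBlocks_diag]
  constructor
  · intro h
    by_contra hA
    exact hA (hB (by omega))
  · intro hA
    -- Specialization cannot raise the rank of `B` above its generic rank.
    have hBle : (B.map (algebraMap R p.ResidueField)).rank ≤ detRank B := by
      rw [← Nat.lt_succ_iff, ← minorsIdeal_le_ker_iff,
        (minorsIdeal_eq_bot_iff _ B).2 (by rw [detRank_eq]; exact Nat.lt_succ_self _)]
      exact bot_le
    omega

end Minors

theorem statement_1
    (R : Type*) [CommRing R] [IsDomain R] [IsNoetherianRing R]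
    (hCM : IsCohenMacaulayRing R)
    (M : Type*) [AddCommGroup M] [Module R M] [Nontrivial M]
    (r : ℕ → ℕ) (l : ℕ) (hbd : ∀ i : ℕ, l < i → r i = 0)
    (D : ∀ i : ℕ, Matrix (Fin (r i)) (Fin (r (i + 1))) R)
    (π : (Fin (r 0) → R) →ₗ[R] M) (hπ : Function.Surjective π)
    (hker : LinearMap.ker π = LinearMap.range (Matrix.mulVecLin (D 0)))
    (hexact : ∀ i : ℕ, LinearMap.ker (Matrix.mulVecLin (D i)) =
      LinearMap.range (Matrix.mulVecLin (D (i + 1)))) :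
    (∀ i : ℕ, (jumpIdeal r D (i + 1)).radical = (fittingIdealOf (D i)).radical) ∧
      jumpIdeal r D 0 ≤ fittingIdealOf (D 0) := by
  refine ⟨fun i => ?_, ?_⟩
  · rw [Ideal.radical_eq_sInf, Ideal.radical_eq_sInf]
    congr 1
    ext p
    refine and_congr_left fun hp => ?_
    have := minorsIdeal_fromBlocks_le_prime_iff (D i) (D (i + 1)) (hexact i) p
    rwa [Fintype.card_fin] at this
  · change minorsIdeal (r 0) (D 0) ≤ minorsIdeal (detRank (D 0)) (D 0)
    have hle : detRank (D 0) ≤ r 0 := by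
      rw [detRank_eq]
      exact Matrix.rank_le_height _
    rcases hle.eq_or_lt with h | h
    · rw [h]
    · rw [(minorsIdeal_eq_bot_iff (r 0) (D 0)).2 (by rwa [detRank_eq] at h)]
      exact bot_le
end

section
/- If 𝔭 is a minimal prime ideal over J^{0}(M) and the height of 𝔭 equals d, then J^{-d}(M) ⊆ 𝔭; moreover 𝔭 is a minimal prime ideal over J^{-d}(M). Equivalently, every irreducible component of V^{0}(M) of codimension d is contained in V^{-d}(M) and is an irreducible component of V^{-d}(M). -/
/-! ### Minors of products -/

/-- Expansion of `det (A * X)` along the rows of `X`: it is a combination of determinants formed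
from rows of `X`. -/
theorem det_mul_mem_of_rows {R : Type*} [CommRing R] {m : Type*} [Fintype m] {k : ℕ}
    {I : Ideal R} (A : Matrix (Fin k) m R) (X : Matrix m (Fin k) R)
    (h : ∀ f : Fin k → m, (X.submatrix f id).det ∈ I) : (A * X).det ∈ I := by
  classical
  have e : A * X = fun i => ∑ a, A i a • X a := by
    ext i j
    simp [Matrix.mul_apply, Finset.sum_apply]
  have e2 : (A * X).det = ∑ f : Fin k → m, (∏ i, A i (f i)) * (X.submatrix f id).det := by
    rw [e]
    have := (Matrix.detRowAlternating (R := R) (n := Fin k)).toMultilinearMap.map_sum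
      (fun i (a : m) => A i a • X a)
    refine this.trans (Finset.sum_congr rfl fun f _ => ?_)
    exact (Matrix.detRowAlternating (R := R) (n := Fin k)).toMultilinearMap.map_smul_univ
      (fun i => A i (f i)) (fun i => X (f i))
  rw [e2]
  exact Ideal.sum_mem _ fun f _ => Ideal.mul_mem_left _ _ (h f)

/-- An ideal form of the Cauchy–Binet formula. -/
theorem det_mul_mul_mem_minorsIdeal {R : Type*} [CommRing R] {m n : Type*} [Fintype m] [Fintype n]
    {k : ℕ} (A : Matrix (Fin k) m R) (E : Matrix m n R) (B : Matrix n (Fin k) R) :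
    (A * E * B).det ∈ minorsIdeal k E := by
  rw [Matrix.mul_assoc]
  refine det_mul_mem_of_rows A _ fun f => ?_
  have e : (E * B).submatrix f id = E.submatrix f id * B := rfl
  rw [e, ← Matrix.det_transpose, Matrix.transpose_mul]
  refine det_mul_mem_of_rows _ _ fun g => ?_
  have e' : ((E.submatrix f id).transpose).submatrix g id = (E.submatrix f g).transpose := rfl
  rw [e', Matrix.det_transpose]
  exact Ideal.subset_span ⟨f, g, rfl⟩

/-! ### Null-homotopies of scalars -/

/-- A matrix whose columns are cycles lifts through the next differential. -/
theorem lift_matrix {R : Type*} [CommRing R] {m n p q : Type*} [Fintype m] [Fintype n] [Fintype p]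
    [Fintype q] {A : Matrix m n R} {B : Matrix n p R}
    (h : LinearMap.ker A.mulVecLin = LinearMap.range B.mulVecLin)
    (X : Matrix n q R) (hX : A * X = 0) : ∃ W : Matrix p q R, B * W = X := by
  have h1 : ∀ j, ∃ w : p → R, B.mulVec w = fun i => X i j := by
    intro j
    have : (fun i => X i j) ∈ LinearMap.ker A.mulVecLin := by
      rw [LinearMap.mem_ker, Matrix.mulVecLin_apply]
      ext i
      exact congrFun (congrFun hX i) j
    rw [h] at this
    exact this
  choose w hw using h1
  refine ⟨fun i j => w j i, ?_⟩
  ext i j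
  exact congrFun (hw j) i

section Resolution

variable {R : Type*} [CommRing R] {r : ℕ → ℕ}
  {D : ∀ i : ℕ, Matrix (Fin (r i)) (Fin (r (i + 1))) R}

theorem mul_succ_eq_zero
    (hexact : ∀ i : ℕ, LinearMap.ker (Matrix.mulVecLin (D i)) =
      LinearMap.range (Matrix.mulVecLin (D (i + 1)))) (i : ℕ) : D i * D (i + 1) = 0 := by
  have h : ∀ v, (D i).mulVec ((D (i + 1)).mulVec v) = 0 := fun v => by
    have : (D (i + 1)).mulVec v ∈ LinearMap.ker (D i).mulVecLin := by
      rw [hexact i]; exact ⟨v, rfl⟩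
    simpa using this
  refine Matrix.ext_of_mulVec_single fun j => ?_
  rw [← Matrix.mulVec_mulVec, h, Matrix.zero_mulVec]

/-- Maximal minors of `A` annihilate its cokernel. -/
theorem exists_mul_eq_smul_one_of_mem {m n : ℕ} {A : Matrix (Fin m) (Fin n) R} {c : R}
    (hc : c ∈ minorsIdeal m A) : ∃ V : Matrix (Fin n) (Fin m) R, A * V = c • 1 := by
  induction hc using Submodule.span_induction with
  | mem x hx =>
    obtain ⟨f, g, rfl⟩ := hx
    by_cases hf : Function.Injective f
    · let σ : Equiv.Perm (Fin m) := Equiv.ofBijective f (Finite.injective_iff_bijective.1 hf)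
      refine ⟨(1 : Matrix (Fin n) (Fin n) R).submatrix id g * (A.submatrix f g).adjugate *
        (1 : Matrix (Fin m) (Fin m) R).submatrix f id, ?_⟩
      have h1 : A * (1 : Matrix (Fin n) (Fin n) R).submatrix id g = A.submatrix id g := by
        ext i j; simp [Matrix.mul_apply, Matrix.one_apply]
      have h2 : (1 : Matrix (Fin m) (Fin m) R).submatrix id σ * A.submatrix f g
          = A.submatrix id g := by
        ext i j
        simp only [Matrix.mul_apply, Matrix.submatrix_apply, id, Matrix.one_apply]
        rw [Finset.sum_eq_single (σ.symm i)]
        · simp; congr 1; exact σ.apply_symm_apply i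
        · intro b _ hb
          rw [if_neg, zero_mul]
          rintro rfl; simp at hb
        · simp
      rw [← Matrix.mul_assoc, ← Matrix.mul_assoc, h1, ← h2, Matrix.mul_assoc _ (A.submatrix f g),
        Matrix.mul_adjugate, Matrix.mul_smul, Matrix.smul_mul, Matrix.mul_one]
      congr 1
      ext i j
      simp only [Matrix.mul_apply, Matrix.submatrix_apply, id, Matrix.one_apply]
      rw [Finset.sum_eq_single (σ.symm i)]
      · have : f (σ.symm i) = i := σ.apply_symm_apply i
        simp [this]
      · intro b _ hb
        rw [if_neg, zero_mul]
        rintro rfl; simp at hb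
      · simp
    · refine ⟨0, ?_⟩
      simp only [Function.Injective, not_forall] at hf
      obtain ⟨a, b, hab, hne⟩ := hf
      rw [Matrix.det_zero_of_row_eq hne (by ext j; simp [hab])]
      simp
  | zero => exact ⟨0, by simp⟩
  | add x y _ _ hx hy =>
    obtain ⟨V, hV⟩ := hx
    obtain ⟨W, hW⟩ := hy
    exact ⟨V + W, by rw [Matrix.mul_add, hV, hW, add_smul]⟩
  | smul a x _ hx =>
    obtain ⟨V, hV⟩ := hx
    exact ⟨a • V, by rw [Matrix.mul_smul, hV, smul_smul, smul_eq_mul]⟩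

/-- Multiplication by an element of the degree `0` jumping ideal is null-homotopic in every positive
homological degree. -/
theorem exists_homotopy_succ
    (hexact : ∀ i : ℕ, LinearMap.ker (Matrix.mulVecLin (D i)) =
      LinearMap.range (Matrix.mulVecLin (D (i + 1)))) {c : R}
    (hc : c ∈ minorsIdeal (r 0) (D 0)) (i : ℕ) :
    ∃ (V : Matrix (Fin (r (i + 2))) (Fin (r (i + 1))) R) (U : Matrix (Fin (r (i + 1))) (Fin (r i)) R),
      D (i + 1) * V + U * D i = c • 1 := by
  have step : ∀ i (U : Matrix (Fin (r (i + 1))) (Fin (r i)) R), D i * U * D i = c • D i →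
      ∃ V : Matrix (Fin (r (i + 2))) (Fin (r (i + 1))) R, D (i + 1) * V + U * D i = c • 1 := by
    intro i U hU
    obtain ⟨V, hV⟩ := lift_matrix (hexact i) (c • 1 - U * D i) (by
      rw [Matrix.mul_sub, Matrix.mul_smul, Matrix.mul_one, ← Matrix.mul_assoc, hU, sub_self])
    exact ⟨V, by rw [hV, sub_add_cancel]⟩
  -- The weaker identity `D i * U * D i = c • D i` is what propagates from one degree to the next.
  have key : ∀ i, ∃ U : Matrix (Fin (r (i + 1))) (Fin (r i)) R, D i * U * D i = c • D i := by
    intro i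
    induction i with
    | zero =>
      obtain ⟨V, hV⟩ := exists_mul_eq_smul_one_of_mem hc
      exact ⟨V, by rw [hV, Matrix.smul_mul, Matrix.one_mul]⟩
    | succ i ih =>
      obtain ⟨U, hU⟩ := ih
      obtain ⟨V, hV⟩ := step i U hU
      refine ⟨V, ?_⟩
      rw [← eq_sub_iff_add_eq] at hV
      rw [hV, Matrix.sub_mul, Matrix.mul_assoc, mul_succ_eq_zero hexact, Matrix.mul_zero, sub_zero,
        Matrix.smul_mul, Matrix.one_mul]
  obtain ⟨U, hU⟩ := key i
  obtain ⟨V, hV⟩ := step i U hU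
  exact ⟨V, U, hV⟩

theorem jumpIdeal_zero_le_of_le
    (hexact : ∀ i : ℕ, LinearMap.ker (Matrix.mulVecLin (D i)) =
      LinearMap.range (Matrix.mulVecLin (D (i + 1)))) {q : Ideal R} (hq : q.IsPrime) (d : ℕ)
    (h : jumpIdeal r D d ≤ q) : jumpIdeal r D 0 ≤ q := by
  cases d with
  | zero => exact h
  | succ i =>
    intro c hc
    obtain ⟨V, U, hVU⟩ := exists_homotopy_succ hexact hc i
    -- `c • 1` factors through the block diagonal matrix, so `c ^ r (i + 1)` is in its minors ideal.
    have := det_mul_mul_mem_minorsIdeal (Matrix.fromCols 1 U)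
      (Matrix.fromBlocks (D (i + 1)) 0 0 (D i)) (Matrix.fromRows V 1)
    rw [Matrix.fromCols_mul_fromBlocks, Matrix.fromCols_mul_fromRows] at this
    simp only [Matrix.one_mul, Matrix.mul_zero, add_zero, zero_add, Matrix.mul_one] at this
    rw [hVU, Matrix.det_smul, Matrix.det_one, mul_one] at this
    exact hq.mem_of_pow_mem _ (h this)

end Resolution

/-! ### From minors of the block diagonal matrix to homotopies -/

/-- A nonzero minor `c` of `A ⊕ B` of size equal to the rank of the middle term of a complex
`B * A = 0` makes `c • 1` null-homotopic there, when the selected rows and columns are aligned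
with the two blocks. The minor is also the determinant of `T = Q * P`, where `P` consists of the
columns of `[A | 1]` selected by `g` and `Q` of the rows of `[1; B]` selected by `f`. Hence
`P * adj T * Q = c • 1`, and this splits into multiples of `A` on the left and of `B` on the
right, because `adj T` is block triangular. -/
theorem exists_homotopy_of_minor_aux {R : Type*} [CommRing R] [IsDomain R] {a b : Type*} [Fintype a]
    [Fintype b] {n : ℕ} (A : Matrix (Fin n) b R) (B : Matrix a (Fin n) R)
    (hBA : B * A = 0) (f : Fin n → Fin n ⊕ a) (g : Fin n → b ⊕ Fin n)
    (hfg : ∀ i, (f i).isLeft = (g i).isLeft)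
    (hdet : ((Matrix.fromBlocks A 0 0 B).submatrix f g).det ≠ 0) :
    ∃ (V : Matrix b (Fin n) R) (U : Matrix (Fin n) a R),
      A * V + U * B = ((Matrix.fromBlocks A 0 0 B).submatrix f g).det • 1 := by
  classical
  set c := ((Matrix.fromBlocks A 0 0 B).submatrix f g).det with hcdef
  let T := (Matrix.fromBlocks A 1 0 B).submatrix f g
  let p : Fin n → Prop := fun i => (f i).isLeft = true
  have hT0 : ∀ i, ¬ p i → ∀ j, p j → T i j = 0 := by
    intro i hi j hj
    simp only [p] at hi hj
    rw [hfg] at hj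
    simp only [T, Matrix.submatrix_apply]
    rcases hfi : f i with x | x <;> rcases hgj : g j with y | y <;> simp_all
  have hTdet := T.twoBlockTriangular_det p hT0
  -- `T` and the block diagonal submatrix have the same diagonal blocks.
  have hcT : c = T.det := by
    rw [hTdet, hcdef, Matrix.twoBlockTriangular_det _ p]
    · congr 2
      · ext ⟨i, hi⟩ ⟨j, hj⟩
        simp only [p] at hi hj
        rw [hfg] at hj
        simp only [T, Matrix.toSquareBlockProp_def, Matrix.of_apply, Matrix.submatrix_apply]
        rcases hfi : f i with x | x <;> rcases hgj : g j with y | y <;> simp_all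
      · ext ⟨i, hi⟩ ⟨j, hj⟩
        simp only [p] at hi hj
        rw [hfg] at hj
        simp only [T, Matrix.toSquareBlockProp_def, Matrix.of_apply, Matrix.submatrix_apply]
        rcases hfi : f i with x | x <;> rcases hgj : g j with y | y <;> simp_all
    · intro i hi j hj
      simp only [p] at hi hj
      rw [hfg] at hj
      simp only [Matrix.submatrix_apply]
      rcases hfi : f i with x | x <;> rcases hgj : g j with y | y <;> simp_all
  let P := (Matrix.fromCols A (1 : Matrix (Fin n) (Fin n) R)).submatrix id g
  let Q := (Matrix.fromRows (1 : Matrix (Fin n) (Fin n) R) B).submatrix f id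
  have hQP : Q * P = T := by
    have : Matrix.fromRows (1 : Matrix (Fin n) (Fin n) R) B *
        Matrix.fromCols A (1 : Matrix (Fin n) (Fin n) R) = Matrix.fromBlocks A 1 0 B := by
      rw [Matrix.fromRows_mul_fromCols, hBA]; simp
    simp only [T, ← this]
    rfl
  have hPNQ : P * T.adjugate * Q = c • 1 := by
    rw [← hQP, Matrix.adjugate_mul_distrib, ← Matrix.mul_assoc, Matrix.mul_adjugate,
      Matrix.mul_assoc, Matrix.adjugate_mul, hcT, ← hQP, Matrix.det_mul]
    simp [smul_smul, mul_comm]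
  -- The adjugate of `T` is block triangular: `T * adj T` is scalar and the lower diagonal block
  -- of `T` is nonsingular.
  have hN0 : ∀ i, ¬ p i → ∀ j, p j → T.adjugate i j = 0 := by
    intro i hi j hj
    have hd : (T.toSquareBlockProp fun i => ¬ p i).det ≠ 0 := by
      intro h0
      rw [h0, mul_zero, ← hcT] at hTdet
      exact hdet hTdet
    have := Matrix.eq_zero_of_mulVec_eq_zero hd
      (v := fun k : {k // ¬ p k} => T.adjugate k.1 j) (by
        ext ⟨k, hk⟩
        have h1 : (T * T.adjugate) k j = 0 := by
          rw [Matrix.mul_adjugate, Matrix.smul_apply, Matrix.one_apply_ne, smul_zero]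
          rintro rfl
          exact hk hj
        rw [Matrix.mul_apply, ← Fintype.sum_subtype_add_sum_subtype p] at h1
        rw [Finset.sum_eq_zero, zero_add] at h1
        · exact h1
        · rintro ⟨x, hx⟩ _
          rw [hT0 k hk x hx, zero_mul])
    exact congrFun this ⟨i, hi⟩
  -- `X` extends `adj T` by zero along the selections `g` and `f`, so that
  -- `[A | 1] * X * [1; B] = P * adj T * Q`; its lower left block is the obstruction to a homotopy.
  let X : Matrix (b ⊕ Fin n) (Fin n ⊕ a) R :=
    (1 : Matrix (b ⊕ Fin n) (b ⊕ Fin n) R).submatrix id g * T.adjugate *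
      (1 : Matrix (Fin n ⊕ a) (Fin n ⊕ a) R).submatrix f id
  have hX21 : X.toBlocks₂₁ = 0 := by
    ext i j
    simp only [X, Matrix.toBlocks₂₁, Matrix.of_apply, Matrix.mul_apply, Matrix.submatrix_apply,
      Finset.sum_mul, Matrix.zero_apply]
    refine Finset.sum_eq_zero fun x _ => Finset.sum_eq_zero fun y _ => ?_
    by_cases hy : g y = Sum.inr i
    · by_cases hx : f x = Sum.inl j
      · rw [hN0 y (by simp [p, hfg, hy]) x (by simp [p, hx])]; simp
      · rw [show (1 : Matrix (Fin n ⊕ a) (Fin n ⊕ a) R) (f x) (id (Sum.inl j)) = 0 from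
          Matrix.one_apply_ne hx, mul_zero]
    · rw [show (1 : Matrix (b ⊕ Fin n) (b ⊕ Fin n) R) (id (Sum.inr i)) (g y) = 0 from
          Matrix.one_apply_ne (Ne.symm hy), zero_mul, zero_mul]
  have hXe : Matrix.fromCols A (1 : Matrix (Fin n) (Fin n) R) * X *
      Matrix.fromRows (1 : Matrix (Fin n) (Fin n) R) B = c • (1 : Matrix (Fin n) (Fin n) R) := by
    rw [← hPNQ]
    have hP : P = Matrix.fromCols A 1 * (1 : Matrix (b ⊕ Fin n) (b ⊕ Fin n) R).submatrix id g := by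
      conv_lhs => simp only [P]; rw [← Matrix.mul_one (Matrix.fromCols A 1)]
      rfl
    have hQ : Q = (1 : Matrix (Fin n ⊕ a) (Fin n ⊕ a) R).submatrix f id * Matrix.fromRows 1 B := by
      conv_lhs => simp only [Q]; rw [← Matrix.one_mul (Matrix.fromRows 1 B)]
      rfl
    rw [hP, hQ]
    simp only [X]
    generalize (1 : Matrix (b ⊕ Fin n) (b ⊕ Fin n) R).submatrix id g = S
    generalize (1 : Matrix (Fin n ⊕ a) (Fin n ⊕ a) R).submatrix f id = S'
    simp only [Matrix.mul_assoc]
    exact (Matrix.mul_assoc _ _ _).symm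
  rw [← Matrix.fromBlocks_toBlocks X, hX21, Matrix.fromCols_mul_fromBlocks,
    Matrix.fromCols_mul_fromRows] at hXe
  refine ⟨X.toBlocks₁₁ + X.toBlocks₁₂ * B, X.toBlocks₂₂, ?_⟩
  rw [← hXe]
  simp only [Matrix.mul_add, Matrix.add_mul, Matrix.mul_one, Matrix.one_mul, Matrix.mul_zero,
    add_zero, Matrix.mul_assoc, add_assoc]

/-- Minors of `A ⊕ B` of the size of the middle term give null-homotopic scalars. A nonzero
minor has a nonzero term in its Leibniz expansion, and the permutation indexing that term aligns
the rows with the columns. -/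
theorem exists_homotopy_of_minor {R : Type*} [CommRing R] [IsDomain R] {a b : Type*} [Fintype a]
    [Fintype b] {n : ℕ} (A : Matrix (Fin n) b R) (B : Matrix a (Fin n) R)
    (hBA : B * A = 0) (f : Fin n → Fin n ⊕ a) (g : Fin n → b ⊕ Fin n) :
    ∃ (V : Matrix b (Fin n) R) (U : Matrix (Fin n) a R),
      A * V + U * B = ((Matrix.fromBlocks A 0 0 B).submatrix f g).det • 1 := by
  by_cases hdet : ((Matrix.fromBlocks A 0 0 B).submatrix f g).det = 0
  · exact ⟨0, 0, by simp [hdet]⟩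
  obtain ⟨σ, hσ⟩ : ∃ σ : Equiv.Perm (Fin n), ∀ i, (f (σ i)).isLeft = (g i).isLeft := by
    by_contra! hcon
    refine hdet ?_
    rw [Matrix.det_apply]
    refine Finset.sum_eq_zero fun σ _ => ?_
    obtain ⟨i, hi⟩ := hcon σ
    rw [Finset.prod_eq_zero (Finset.mem_univ i), smul_zero]
    rw [Matrix.submatrix_apply]
    rcases hfi : f (σ i) with x | x <;> rcases hgj : g i with y | y <;> simp_all
  have hp : ((Matrix.fromBlocks A 0 0 B).submatrix (f ∘ σ) g).det =
      Equiv.Perm.sign σ * ((Matrix.fromBlocks A 0 0 B).submatrix f g).det :=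
    Matrix.det_permute σ ((Matrix.fromBlocks A 0 0 B).submatrix f g)
  have hs : ((Equiv.Perm.sign σ : ℤ) : R) * ((Equiv.Perm.sign σ : ℤ) : R) = 1 := by
    rw [← Int.cast_mul, ← Units.val_mul, Int.units_mul_self]; simp
  obtain ⟨V, U, h⟩ := exists_homotopy_of_minor_aux A B hBA (f ∘ σ) g hσ (by
    rw [hp]
    exact mul_ne_zero (left_ne_zero_of_mul_eq_one hs) hdet)
  refine ⟨((Equiv.Perm.sign σ : ℤ) : R) • V, ((Equiv.Perm.sign σ : ℤ) : R) • U, ?_⟩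
  rw [Matrix.mul_smul, Matrix.smul_mul, ← smul_add, h, hp, smul_smul, ← mul_assoc, hs, one_mul]

/-! ### Annihilators of Tor -/

/-- An element of a minimal prime `p` over `I` is nilpotent modulo `I` locally at `p`. -/
theorem exists_mul_pow_mem {R : Type*} [CommRing R] {I p : Ideal R} (hp : p ∈ I.minimalPrimes)
    {x : R} (hx : x ∈ p) : ∃ s ∉ p, ∃ n : ℕ, x ^ n * s ∈ I := by
  have hpp : p.IsPrime := hp.1.1
  by_contra! hcon
  obtain ⟨q, hq, hIq, hdis⟩ := Ideal.exists_le_prime_disjoint I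
    (Submonoid.powers x ⊔ p.primeCompl) (by
      rw [Set.disjoint_left]
      intro y hy hyS
      obtain ⟨_, ⟨n, rfl⟩, s, hs, rfl⟩ := Submonoid.mem_sup.1 hyS
      exact hcon s hs n hy)
  rw [Set.disjoint_left] at hdis
  have hqp : q ≤ p := fun y hy => by
    by_contra hyp
    exact hdis hy ((le_sup_right : p.primeCompl ≤ _) hyp)
  exact hdis (hp.2 ⟨hq, hIq⟩ hqp hx)
    ((le_sup_left : Submonoid.powers x ≤ _) (Submonoid.mem_powers x))

/-- `v : F_k` is a cycle of `F ⊗ R / I`; in degree `0` every element is a cycle. -/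
def IsCycleMod {R : Type*} [CommRing R] {r : ℕ → ℕ}
    (D : ∀ i : ℕ, Matrix (Fin (r i)) (Fin (r (i + 1))) R) (I : Ideal R) :
    ∀ k : ℕ, (Fin (r k) → R) → Prop
  | 0, _ => True
  | k + 1, v => ∀ i, (D k).mulVec v i ∈ I

/-- The scalar `s` kills the `k`-th homology of `F ⊗ R / I`, that is, `Tor_k(M, R / I)` when `F`
resolves `M`. -/
def KillsTor {R : Type*} [CommRing R] {r : ℕ → ℕ}
    (D : ∀ i : ℕ, Matrix (Fin (r i)) (Fin (r (i + 1))) R) (I : Ideal R) (k : ℕ) (s : R) : Prop :=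
  ∀ v, IsCycleMod D I k v → ∃ w, ∀ i, s * v i - (D k).mulVec w i ∈ I

section Resolution

variable {R : Type*} [CommRing R] {r : ℕ → ℕ}
  {D : ∀ i : ℕ, Matrix (Fin (r i)) (Fin (r (i + 1))) R}

theorem mulVec_mem {m n : Type*} [Fintype n] {I : Ideal R} (U : Matrix m n R) {v : n → R}
    (hv : ∀ i, v i ∈ I) (i : m) : U.mulVec v i ∈ I :=
  Ideal.sum_mem _ fun j _ => Ideal.mul_mem_left _ _ (hv j)

theorem killsTor_succ_of_homotopy {c : R} {k : ℕ} 
    (h : ∃ (V : Matrix (Fin (r (k + 2))) (Fin (r (k + 1))) R)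
      (U : Matrix (Fin (r (k + 1))) (Fin (r k)) R), D (k + 1) * V + U * D k = c • 1)
    (I : Ideal R) : KillsTor D I (k + 1) c := by
  obtain ⟨V, U, h⟩ := h
  intro v hv
  refine ⟨V.mulVec v, fun i => ?_⟩
  have e : c * v i - (D (k + 1)).mulVec (V.mulVec v) i = U.mulVec ((D k).mulVec v) i := by
    have := congrFun (congrArg (fun X => X.mulVec v) h) i
    simp only [Matrix.add_mulVec, ← Matrix.mulVec_mulVec, Matrix.smul_mulVec, Matrix.one_mulVec,
      Pi.add_apply, Pi.smul_apply, smul_eq_mul] at this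
    rw [← this]; ring
  rw [e]
  exact mulVec_mem U hv i

theorem killsTor_of_mem
    (hexact : ∀ i : ℕ, LinearMap.ker (Matrix.mulVecLin (D i)) =
      LinearMap.range (Matrix.mulVecLin (D (i + 1)))) {c : R}
    (hc : c ∈ minorsIdeal (r 0) (D 0)) (I : Ideal R) (k : ℕ) : KillsTor D I k c := by
  cases k with
  | zero =>
    obtain ⟨V, hV⟩ := exists_mul_eq_smul_one_of_mem hc
    intro v _
    refine ⟨V.mulVec v, fun i => ?_⟩
    rw [Matrix.mulVec_mulVec, hV, Matrix.smul_mulVec, Matrix.one_mulVec]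
    simp
  | succ k => exact killsTor_succ_of_homotopy (exists_homotopy_succ hexact hc k) I

/-- If `x` is regular modulo `I`, `s` kills `Tor_{k+1}(M, R / (I, x))` and `x ^ n * t` kills
`Tor_k(M, R / I)`, then `s ^ n * t` kills the latter. Indeed the connecting map
`Tor_{k+1}(M, R / (I, x)) → Tor_k(M, R / I)` surjects onto the kernel of `x`, so `s` kills that
kernel, and powers of `x` can be traded for powers of `s` one at a time. -/
theorem killsTor_descend (hD : ∀ i, D i * D (i + 1) = 0) {I : Ideal R} {x : R}
    (hx : ∀ a, x * a ∈ I → a ∈ I) {k : ℕ} {s t : R} {n : ℕ}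
    (hs : KillsTor D (I ⊔ Ideal.span {x}) (k + 1) s)
    (ht : KillsTor D I k (x ^ n * t)) : KillsTor D I k (s ^ n * t) := by
  induction n generalizing t with
  | zero => simpa using ht
  | succ n ih =>
    have h1 : KillsTor D I k (x ^ n * (s * t)) := by
      intro v hv
      obtain ⟨u, hu⟩ := ht v hv
      -- `D k * u` is divisible by `x` modulo `I`, so `u` is a cycle modulo `(I, x)`.
      obtain ⟨y, hy⟩ := hs u (fun i => by
        have : (D k).mulVec u i = x * (x ^ n * t * v i)
            - (x ^ (n + 1) * t * v i - (D k).mulVec u i) := by ring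
        rw [this]
        exact Ideal.sub_mem _
          (Ideal.mem_sup_right (Ideal.mul_mem_right _ _ (Ideal.mem_span_singleton_self x)))
          (Ideal.mem_sup_left (hu i)))
      have hz : ∀ i, ∃ z, s * u i - (D (k + 1)).mulVec y i - x * z ∈ I := by
        intro i
        obtain ⟨a, ha, b, hb, hab⟩ := Submodule.mem_sup.1 (hy i)
        obtain ⟨z, rfl⟩ := Ideal.mem_span_singleton'.1 hb
        exact ⟨z, by rw [← hab]; convert ha using 1; ring⟩
      choose z hz using hz
      refine ⟨z, fun i => hx _ ?_⟩
      have h2 := mulVec_mem (D k) (v := s • u - (D (k + 1)).mulVec y - x • z) hz i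
      rw [Matrix.mulVec_sub, Matrix.mulVec_sub, Matrix.mulVec_mulVec, hD, Matrix.zero_mulVec,
        Matrix.mulVec_smul, Matrix.mulVec_smul] at h2
      simp only [Pi.sub_apply, Pi.smul_apply, smul_eq_mul, sub_zero] at h2
      have h3 := Ideal.add_mem _ (Ideal.mul_mem_left _ s (hu i)) h2
      convert h3 using 1
      ring
    have := ih h1
    convert this using 1
    ring

/-- A minimal prime over the degree `0` jumping ideal contains the jumping ideal of degree `-d`
as soon as it contains a regular sequence of length `d`. -/
theorem jumpIdeal_le_of_regular [IsDomain R]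
    (hexact : ∀ i : ℕ, LinearMap.ker (Matrix.mulVecLin (D i)) =
      LinearMap.range (Matrix.mulVecLin (D (i + 1)))) {p : Ideal R}
    (hp : p ∈ (jumpIdeal r D 0).minimalPrimes) (rs : List R) (hrs : ∀ x ∈ rs, x ∈ p)
    (hreg : RingTheory.Sequence.IsWeaklyRegular R rs) :
    jumpIdeal r D rs.length ≤ p := by
  have hpp : p.IsPrime := hp.1.1
  have hD := mul_succ_eq_zero hexact
  generalize hd : rs.length = d
  cases d with
  | zero => exact hp.1.2
  | succ d =>
    refine Ideal.span_le.2 ?_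
    rintro c ⟨f, g, hc⟩
    by_contra hcp
    have hhom := exists_homotopy_of_minor (D (d + 1)) (D d) (hD d) f g
    rw [← hc] at hhom
    have key : ∀ j ≤ d + 1, ∃ s ∉ p,
        KillsTor D (Ideal.ofList (rs.take (d + 1 - j))) (d + 1 - j) s := by
      intro j
      induction j with
      | zero => exact fun _ => ⟨c, hcp, killsTor_succ_of_homotopy hhom _⟩
      | succ j ih =>
        intro hj
        obtain ⟨s, hsp, hs⟩ := ih (by omega)
        obtain ⟨k, hk⟩ : ∃ k, d + 1 - (j + 1) = k := ⟨_, rfl⟩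
        have hk' : d + 1 - j = k + 1 := by omega
        rw [hk]
        rw [hk'] at hs
        have hlt : k < rs.length := by omega
        rw [List.take_succ_eq_append_getElem hlt, Ideal.ofList_append, Ideal.ofList_singleton] at hs
        obtain ⟨t, htp, n, ht⟩ := exists_mul_pow_mem hp (hrs _ (List.getElem_mem hlt))
        refine ⟨s ^ n * t, fun h => ?_, killsTor_descend hD ?_ hs (killsTor_of_mem hexact ht _ k)⟩
        · exact (hpp.mem_or_mem h).elim (fun h => hsp (hpp.mem_of_pow_mem _ h)) htp
        · intro a ha
          have h1 := hreg.regular_mod_prev k hlt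
          have h2 := @h1 (Submodule.Quotient.mk a) 0 (by
            simp only [smul_zero, ← Submodule.Quotient.mk_smul]
            rw [Submodule.Quotient.mk_eq_zero]
            simpa using ha)
          rw [Submodule.Quotient.mk_eq_zero] at h2
          simpa using h2
    obtain ⟨s, hsp, hs⟩ := key (d + 1) le_rfl
    rw [Nat.sub_self] at hs
    simp only [List.take_zero, Ideal.ofList_nil] at hs
    -- Now `s` kills the cokernel of `D 0`, so `s ^ r 0` is in the degree `0` jumping ideal.
    have hV : ∀ j, ∃ w, (D 0).mulVec w = Pi.single j s := by
      intro j
      obtain ⟨w, hw⟩ := hs (Pi.single j 1) trivial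
      refine ⟨w, ?_⟩
      ext i
      have := sub_eq_zero.1 ((Submodule.mem_bot R).1 (hw i))
      rw [← this]
      simp [Pi.single_apply]
    choose w hw using hV
    have hDV : (1 : Matrix (Fin (r 0)) (Fin (r 0)) R) * D 0 * (Matrix.of fun i j => w j i)
        = s • 1 := by
      ext i j
      rw [Matrix.one_mul]
      refine (congrFun (hw j) i).trans ?_
      simp [Pi.single_apply, Matrix.one_apply]
    have := det_mul_mul_mem_minorsIdeal (1 : Matrix (Fin (r 0)) (Fin (r 0)) R) (D 0)
      (Matrix.of fun i j => w j i)
    rw [hDV, Matrix.det_smul, Matrix.det_one, mul_one] at this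
    exact hsp (hpp.mem_of_pow_mem _ (hp.1.2 this))

end Resolution

/-! ### Jumping ideals of Cohen–Macaulay domains -/

theorem exists_regular_of_height {R : Type*} [CommRing R] (hCM : IsCohenMacaulayRing R)
    {p : Ideal R} (hp : p ≠ ⊤) {d : ℕ} (hd : idealHeight R p = d) :
    ∃ rs : List R, rs.length = d ∧ (∀ x ∈ rs, x ∈ p) ∧
      RingTheory.Sequence.IsWeaklyRegular R rs := by
  rcases Nat.eq_zero_or_pos d with rfl | hpos
  · exact ⟨[], rfl, by simp, RingTheory.Sequence.IsWeaklyRegular.nil R R⟩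
  have h := (hCM p hp).trans hd
  unfold idealDepth at h
  have hlt : ((d - 1 : ℕ) : ℕ∞) < (d : ℕ∞) := by exact_mod_cast Nat.sub_lt hpos one_pos
  rw [← h] at hlt
  obtain ⟨n, hn, hlt⟩ := lt_sSup_iff.1 hlt
  have hle := le_sSup hn
  rw [h] at hle
  obtain ⟨rs, rfl, hmem, hreg⟩ := hn
  have h1 : d - 1 < rs.length := by exact_mod_cast hlt
  have h2 : rs.length ≤ d := by exact_mod_cast hle
  exact ⟨rs, by omega, hmem, hreg.toIsWeaklyRegular⟩

theorem statement_4
    (R : Type*) [CommRing R] [IsDomain R] [IsNoetherianRing R]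
    (hCM : IsCohenMacaulayRing R)
    (M : Type*) [AddCommGroup M] [Module R M] [Nontrivial M]
    (r : ℕ → ℕ) (l : ℕ) (hbd : ∀ i : ℕ, l < i → r i = 0)
    (D : ∀ i : ℕ, Matrix (Fin (r i)) (Fin (r (i + 1))) R)
    (π : (Fin (r 0) → R) →ₗ[R] M) (hπ : Function.Surjective π)
    (hker : LinearMap.ker π = LinearMap.range (Matrix.mulVecLin (D 0)))
    (hexact : ∀ i : ℕ, LinearMap.ker (Matrix.mulVecLin (D i)) =
      LinearMap.range (Matrix.mulVecLin (D (i + 1)))) :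
    ∀ (p : Ideal R) (d : ℕ), p ∈ (jumpIdeal r D 0).minimalPrimes →
      idealHeight R p = (d : ℕ∞) →
      jumpIdeal r D d ≤ p ∧ p ∈ (jumpIdeal r D d).minimalPrimes := by
  intro p d hp hd
  have hle : jumpIdeal r D d ≤ p := by
    obtain ⟨rs, rfl, hmem, hreg⟩ := exists_regular_of_height hCM hp.1.1.ne_top hd
    exact jumpIdeal_le_of_regular hexact hp rs hmem hreg
  refine ⟨hle, ⟨hp.1.1, hle⟩, fun q hq hqp => ?_⟩
  exact hp.2 ⟨hq.1, jumpIdeal_zero_le_of_le hexact hq.1 d hq.2⟩ hqp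
end
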